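/- Let K be an algebraically closed field, let n >= 1, and let y, z in FPF_n(I_n). The following are equivalent: (a) y >= z in the Bruhat order on I^FPF_infty; (b) r_y(i,j) <= r_z(i,j) for all (i,j) in [n] x [n]; (c) X^ss_y is contained in X^ss_z. -/

import Mathlib

namespace Paper

/-!
We model a permutation of the positive integers `{1, 2, 3, ...}` as an `Equiv.Perm ℕ`
that fixes `0`; all notions below refer only to positive inputs.
-/

/-- The rank `r_w(i,j) = #{a ∈ [i] : w(a) ∈ [j]}` of the `i × j` partial
permutation matrix of `w`, where `[k] = {1, ..., k}`. -/
def rnk (w : Equiv.Perm ℕ) (i j : ℕ) : ℕ :=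
  ((Finset.Icc 1 i).filter fun a => w a ∈ Finset.Icc 1 j).card

/-- Right descent set `Des_R(w) = {i ≥ 1 : w(i) > w(i+1)}`. -/
def DesR (w : Equiv.Perm ℕ) : Set ℕ := {i | 1 ≤ i ∧ w (i + 1) < w i}

/-- Left descent set `Des_L(w) = Des_R(w⁻¹)`. -/
def DesL (w : Equiv.Perm ℕ) : Set ℕ := DesR w⁻¹

/-- `S_∞`: permutations of the positive integers fixing all but finitely many points. -/
def SInfty : Set (Equiv.Perm ℕ) :=
  {w | w 0 = 0 ∧ Set.Finite {i : ℕ | w i ≠ i}}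

/-- `S^{m,n}_∞ = {w ∈ S_∞ : Des_R(w) ⊆ [m], Des_L(w) ⊆ [n]}`. -/
def SmnInfty (m n : ℕ) : Set (Equiv.Perm ℕ) :=
  {w | w ∈ SInfty ∧ DesR w ⊆ Set.Icc 1 m ∧ DesL w ⊆ Set.Icc 1 n}

/-- The Rothe diagram `D(w) = {(i,j) : 0 < j < w(i), 0 < i < w⁻¹(j)}`. -/
def Rothe (w : Equiv.Perm ℕ) : Set (ℕ × ℕ) :=
  {p | 0 < p.2 ∧ p.2 < w p.1 ∧ 0 < p.1 ∧ p.1 < w⁻¹ p.2}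

/-- The function `1_FPF`, sending `i ↦ i - (-1)^i` on positive integers (it fixes `0`). -/
def oneFPF : ℕ → ℕ := fun i => if i % 2 = 1 then i + 1 else i - 1

/-- `I^FPF_∞`: fixed-point-free involutions of the positive integers agreeing with
`1_FPF` at all sufficiently large inputs. -/
def IFPFInfty : Set (Equiv.Perm ℕ) :=
  {z | z 0 = 0 ∧ (∀ i, 1 ≤ i → z i ≠ i) ∧ z * z = 1 ∧ ∃ N, ∀ i, N ≤ i → z i = oneFPF i}

/-- The skew-symmetric Rothe diagram `D^ss(z) = {(i,j) : 0 < j < z(i), j < i < z(j)}`. -/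
def Dss (z : Equiv.Perm ℕ) : Set (ℕ × ℕ) :=
  {p | 0 < p.2 ∧ p.2 < z p.1 ∧ p.2 < p.1 ∧ p.1 < z p.2}

/-- `FPF_n(I_n) = {z ∈ I^FPF_∞ : D^ss(z) ⊆ [n] × [n]}`. -/
def FPFIn (n : ℕ) : Set (Equiv.Perm ℕ) :=
  {z | z ∈ IFPFInfty ∧ Dss z ⊆ Set.Icc 1 n ×ˢ Set.Icc 1 n}

/-- `ℓ_fpf(z) = |D^ss(z)|`. -/
noncomputable def ellFpf (z : Equiv.Perm ℕ) : ℕ := (Dss z).ncard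

/-- Bruhat order on `I^FPF_∞`: reflexive-transitive closure of `z < (i,j) z (i,j)`
whenever `i < j` and `ℓ_fpf` goes up by exactly one. -/
def fpfBruhatLe (z y : Equiv.Perm ℕ) : Prop :=
  Relation.ReflTransGen
    (fun a b => ∃ i j : ℕ, 1 ≤ i ∧ i < j ∧
      b = Equiv.swap i j * a * Equiv.swap i j ∧ ellFpf b = ellFpf a + 1) z y

/-- `i` is a visible descent of `z` if `i ≥ 1` and `z(i+1) < min(i, z(i))`. -/
def visibleDescent (z : Equiv.Perm ℕ) (i : ℕ) : Prop :=
  1 ≤ i ∧ z (i + 1) < min i (z i)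

/-- `Ψ(z, p) = {(p,r) z (p,r) : r > p, ℓ_fpf((p,r) z (p,r)) = ℓ_fpf(z) + 1}`. -/
def PsiSet (z : Equiv.Perm ℕ) (p : ℕ) : Set (Equiv.Perm ℕ) :=
  {y | ∃ r : ℕ, p < r ∧ y = Equiv.swap p r * z * Equiv.swap p r ∧ ellFpf y = ellFpf z + 1}

/-- The dominant component `dom(z) = {(i,j) : i, j ≥ 1, r_z(i,j) = 0}`. -/
def domSet (z : Equiv.Perm ℕ) : Set (ℕ × ℕ) :=
  {p | 1 ≤ p.1 ∧ 1 ≤ p.2 ∧ rnk z p.1 p.2 = 0}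

/-- `(p, q)` is an outer corner of `dom(z)`. -/
def IsOuterCorner (z : Equiv.Perm ℕ) (p q : ℕ) : Prop :=
  1 ≤ p ∧ 1 ≤ q ∧ (p, q) ∉ domSet z ∧
    (p = 1 ∨ (p - 1, q) ∈ domSet z) ∧ (q = 1 ∨ (p, q - 1) ∈ domSet z)

/-- `I_n`: involutions in `S_∞` fixing every `i > n`. -/
def InvolIn (n : ℕ) : Set (Equiv.Perm ℕ) :=
  {w | w 0 = 0 ∧ w * w = 1 ∧ ∀ i, n < i → w i = i}

/-- The fixed points of `z` lying in `[n]`. -/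
def fixedPtsIn (n : ℕ) (z : Equiv.Perm ℕ) : Finset ℕ :=
  (Finset.Icc 1 n).filter fun i => z i = i

/-- The function swapping `m + 2t - 1` and `m + 2t` for every `t ≥ 1`, fixing all other points. -/
def tailSwapFun (m : ℕ) : ℕ → ℕ := fun i =>
  if i ≤ m then i else if (i - m) % 2 = 1 then i + 1 else i - 1

theorem tailSwapFun_involutive (m : ℕ) : Function.Involutive (tailSwapFun m) := by
  intro i
  unfold tailSwapFun
  split_ifs <;> omega

/-- The involution swapping `m + 2t - 1` and `m + 2t` for every `t ≥ 1`. -/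
def tailSwap (m : ℕ) : Equiv.Perm ℕ :=
  Function.Involutive.toPerm _ (tailSwapFun_involutive m)

/-- The fixed-point-free standardization `FPF_n(z) = z ⋅ (i_1,n+1)⋯(i_k,n+k) ⋅ c`,
where `i_1 < ⋯ < i_k` are the fixed points of `z` in `[n]` and `c` swaps
`n+k+2t-1, n+k+2t` for all `t ≥ 1`. -/
noncomputable def fpfStd (n : ℕ) (z : Equiv.Perm ℕ) : Equiv.Perm ℕ :=
  z *
    (List.ofFn fun t : Fin (fixedPtsIn n z).card =>
      Equiv.swap ((fixedPtsIn n z).orderEmbOfFin rfl t) (n + (t : ℕ) + 1)).prod *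
    tailSwap (n + (fixedPtsIn n z).card)

/-- `Mat^ss_n(K)`: skew-symmetric `n × n` matrices (transpose is the negative, zero diagonal).
Row/column index `a : Fin n` corresponds to the (1-indexed) row/column `a + 1`. -/
def MatSS (K : Type*) [CommRing K] (n : ℕ) : Set (Matrix (Fin n) (Fin n) K) :=
  {A | A.transpose = -A ∧ ∀ i, A i i = 0}

/-- The skew-symmetric matrix Schubert variety
`X^ss_z = {A ∈ Mat^ss_n : rank A_{[i][j]} ≤ r_z(i,j) for all i, j ∈ [n]}`. -/
noncomputable def Xss (K : Type*) [Field K] (n : ℕ) (z : Equiv.Perm ℕ) :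
    Set (Matrix (Fin n) (Fin n) K) :=
  {A | A ∈ MatSS K n ∧ ∀ (i j : ℕ) (hi : i ≤ n) (hj : j ≤ n), 1 ≤ i → 1 ≤ j →
    (A.submatrix (Fin.castLE hi) (Fin.castLE hj)).rank ≤ rnk z i j}

/-- `#{(i,j) : i > j, j < z(i), i < z(j)}` for a permutation of `Fin N`
(the `0`-indexed version of `ℓ_fpf`). -/
def ellFpfFin {N : ℕ} (z : Equiv.Perm (Fin N)) : ℕ :=
  (Finset.univ.filter fun p : Fin N × Fin N => p.2 < p.1 ∧ p.2 < z p.1 ∧ p.1 < z p.2).card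

/-- The Pfaffian of an `N × N` matrix:
`pf(A) = ∑_{z fpf involution of [N]} (-1)^{ℓ_fpf(z)} ∏_{z(i) < i} A_{z(i), i}`.
(The sum is empty, hence `0`, when `N` is odd.) -/
noncomputable def Pfaffian {R : Type*} [CommRing R] {N : ℕ} (A : Matrix (Fin N) (Fin N) R) : R :=
  ∑ z ∈ Finset.univ.filter (fun z : Equiv.Perm (Fin N) => (∀ i, z i ≠ i) ∧ ∀ i, z (z i) = i),
    (-1 : R) ^ ellFpfFin z * ∏ i ∈ Finset.univ.filter (fun i : Fin N => z i < i), A (z i) i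

/-- Index set for the variables `u_{ij}`, `n ≥ i > j ≥ 1`, of the coordinate ring
`R_n = K[Mat^ss_n]`; the variable `⟨(a, b), _⟩` is `u_{a+1, b+1}`. -/
abbrev SSVar (n : ℕ) : Type := {p : Fin n × Fin n // p.2 < p.1}

/-- The generic skew-symmetric matrix `U^ss` over `R_n`. -/
noncomputable def Uss (K : Type*) [CommRing K] (n : ℕ) :
    Matrix (Fin n) (Fin n) (MvPolynomial (SSVar n) K) :=
  Matrix.of fun i j =>
    if h : j < i then MvPolynomial.X ⟨(i, j), h⟩
    else if h' : i < j then -MvPolynomial.X ⟨(j, i), h'⟩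
    else 0

/-- The ideal of polynomials vanishing on a set `X`, where a point `A` is evaluated
via `ev A : σ → K`. -/
noncomputable def vanishingIdeal {K : Type*} [CommRing K] {σ M : Type*}
    (X : Set M) (ev : M → σ → K) : Ideal (MvPolynomial σ K) where
  carrier := {f | ∀ A ∈ X, MvPolynomial.eval (ev A) f = 0}
  zero_mem' := by simp
  add_mem' := by
    intro f g hf hg
    simp only [Set.mem_setOf_eq] at *
    intro A hA
    rw [map_add, hf A hA, hg A hA, add_zero]
  smul_mem' := by
    intro c f hf
    simp only [Set.mem_setOf_eq] at *
    intro A hA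
    rw [smul_eq_mul, map_mul, hf A hA, mul_zero]

/-- `I(X^ss_z) ⊆ R_n`, where `u_{ij}` is evaluated at `A` as `A_{ij}`. -/
noncomputable def IXss (K : Type*) [Field K] (n : ℕ) (z : Equiv.Perm ℕ) :
    Ideal (MvPolynomial (SSVar n) K) :=
  vanishingIdeal (Xss K n z) fun A v => A v.1.1 v.1.2

/-- `pf(U^ss_{RR})` for a finite row/column set `R` (listed in increasing order). -/
noncomputable def pfUss (K : Type*) [CommRing K] {n : ℕ} (R : Finset (Fin n)) :
    MvPolynomial (SSVar n) K :=
  Pfaffian ((Uss K n).submatrix (fun s => R.orderEmbOfFin rfl s) fun t => R.orderEmbOfFin rfl t)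

/-- The ideal `I^ss_z`, generated by the Pfaffians `pf(U^ss_{RR})` over all nonempty
even-size `R ⊆ [n]` such that `R ⊆ [i]` and `|R ∩ [j]| > r_z(i,j)` for some `i ≥ j`. -/
noncomputable def IssIdeal (K : Type*) [Field K] (n : ℕ) (z : Equiv.Perm ℕ) :
    Ideal (MvPolynomial (SSVar n) K) :=
  Ideal.span {f : MvPolynomial (SSVar n) K | ∃ R : Finset (Fin n),
    R.Nonempty ∧ Even R.card ∧
    (∃ i j : ℕ, 1 ≤ j ∧ j ≤ i ∧ i ≤ n ∧ (∀ a ∈ R, (a : ℕ) + 1 ≤ i) ∧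
      rnk z i j < (R.filter fun a : Fin n => (a : ℕ) + 1 ≤ j).card) ∧
    f = pfUss K R}

/-- The square-free monomial `u^ss_{AB}`: zero if `A ⊙ B` meets the diagonal, and otherwise
the product of the variables `u_{ij}` over the pairs `i > j` with `(i,j)` or `(j,i)` in
`A ⊙ B = {(a_0, b_r), (a_1, b_{r-1}), ..., (a_r, b_0)}`. -/
noncomputable def ussMon (K : Type*) [CommRing K] {n : ℕ} (A B : Finset (Fin n)) :
    MvPolynomial (SSVar n) K :=
  if h : A.card = B.card then
    if ∃ t : Fin A.card, (A.orderEmbOfFin rfl t : Fin n) = B.orderEmbOfFin h.symm t.rev then 0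
    else
      ∏ v ∈ Finset.univ.filter (fun v : SSVar n => ∃ t : Fin A.card,
          (A.orderEmbOfFin rfl t = v.1.1 ∧ B.orderEmbOfFin h.symm t.rev = v.1.2) ∨
          (A.orderEmbOfFin rfl t = v.1.2 ∧ B.orderEmbOfFin h.symm t.rev = v.1.1)),
        MvPolynomial.X v
  else 0

/-- The monomial ideal `J^ss_r` of a symmetric rank table `r`, generated by the monomials
`u^ss_{AB}` with `A ⊆ [i]`, `B ⊆ [j]`, `|A| = |B| = r(i,j) + 1` for some `n ≥ i ≥ j ≥ 1`. -/
noncomputable def JssIdealOfTable (K : Type*) [CommRing K] (n : ℕ) (r : ℕ → ℕ → ℕ) :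
    Ideal (MvPolynomial (SSVar n) K) :=
  Ideal.span {g : MvPolynomial (SSVar n) K | ∃ (i j : ℕ) (A B : Finset (Fin n)),
    1 ≤ j ∧ j ≤ i ∧ i ≤ n ∧
    (∀ a ∈ A, (a : ℕ) + 1 ≤ i) ∧ (∀ b ∈ B, (b : ℕ) + 1 ≤ j) ∧
    A.card = r i j + 1 ∧ B.card = r i j + 1 ∧ g = ussMon K A B}

/-- `J^ss_z = J^ss_{r_z}`. -/
noncomputable def JssIdeal (K : Type*) [CommRing K] (n : ℕ) (z : Equiv.Perm ℕ) :
    Ideal (MvPolynomial (SSVar n) K) :=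
  JssIdealOfTable K n (rnk z)

/-- Total degree of a monomial (exponent vector). -/
def totalDeg {σ : Type*} (m : σ →₀ ℕ) : ℕ := m.sum fun _ e => e

/-- The lexicographic order on the variables `u_{ij}` by the pair `(i, j)`. -/
def varLT {n : ℕ} (v w : SSVar n) : Prop :=
  v.1.1 < w.1.1 ∨ (v.1.1 = w.1.1 ∧ v.1.2 < w.1.2)

/-- The (graded) reverse lexicographic term order on monomials of `R_n`:
`m₁ < m₂` iff `deg m₁ < deg m₂`, or the degrees agree and the lexicographically largest
variable with different exponents has strictly larger exponent in `m₁`. -/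
def revlexLT {n : ℕ} (m₁ m₂ : SSVar n →₀ ℕ) : Prop :=
  totalDeg m₁ < totalDeg m₂ ∨
    (totalDeg m₁ = totalDeg m₂ ∧ ∃ v, m₂ v < m₁ v ∧ ∀ w, varLT v w → m₁ w = m₂ w)

/-- The initial ideal of `I` with respect to a strict term order `lt`: the ideal
generated by the leading monomials `init(f)` of the nonzero `f ∈ I`. -/
noncomputable def initIdeal {K : Type*} [CommRing K] {σ : Type*}
    (lt : (σ →₀ ℕ) → (σ →₀ ℕ) → Prop) (I : Ideal (MvPolynomial σ K)) :
    Ideal (MvPolynomial σ K) :=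
  Ideal.span {g : MvPolynomial σ K | ∃ f ∈ I, f ≠ 0 ∧ ∃ m : σ →₀ ℕ, m ∈ f.support ∧
    (∀ m' ∈ f.support, m' ≠ m → lt m' m) ∧ g = MvPolynomial.monomial m (1 : K)}

/-- A term order on the monomials of a polynomial ring: a linear order in which `1` is
the unique minimum and multiplication by a fixed monomial preserves order. -/
structure TermOrder (σ : Type*) where
  le : (σ →₀ ℕ) → (σ →₀ ℕ) → Prop
  trans : ∀ a b c, le a b → le b c → le a c
  antisymm : ∀ a b, le a b → le b a → a = b
  total : ∀ a b, le a b ∨ le b a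
  zero_le : ∀ a, le 0 a
  add_le_add_right : ∀ a b c, le a b → le (a + c) (b + c)

/-- The initial ideal of `I` with respect to a term order `τ`. -/
noncomputable def initIdealLe {K : Type*} [CommRing K] {σ : Type*}
    (τ : TermOrder σ) (I : Ideal (MvPolynomial σ K)) : Ideal (MvPolynomial σ K) :=
  Ideal.span {g : MvPolynomial σ K | ∃ f ∈ I, f ≠ 0 ∧ ∃ m : σ →₀ ℕ, m ∈ f.support ∧
    (∀ m' ∈ f.support, τ.le m' m) ∧ g = MvPolynomial.monomial m (1 : K)}

/-- An ideal is homogeneous (w.r.t. total degree) iff it contains all homogeneous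
components of its elements. -/
def IsHomogIdeal {K : Type*} [CommSemiring K] {σ : Type*}
    (I : Ideal (MvPolynomial σ K)) : Prop :=
  ∀ f ∈ I, ∀ d : ℕ, MvPolynomial.homogeneousComponent d f ∈ I

/-- The reading order on boxes: rows top to bottom, each row right to left. -/
def pdRel (p q : ℕ × ℕ) : Prop := p.1 < q.1 ∨ (p.1 = q.1 ∧ q.2 ≤ p.2)

instance : DecidableRel pdRel := fun p q => by unfold pdRel; infer_instance

instance : IsTrans (ℕ × ℕ) pdRel :=
  ⟨fun a b c hab hbc => by unfold pdRel at *; omega⟩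

instance : IsAntisymm (ℕ × ℕ) pdRel :=
  ⟨fun a b hab hba => by
    unfold pdRel at hab hba
    exact Prod.ext_iff.mpr ⟨by omega, by omega⟩⟩

instance : IsTotal (ℕ × ℕ) pdRel :=
  ⟨fun a b => by unfold pdRel; omega⟩

/-- The pipe dream reading word of a finite set `D` of boxes: the letters `i + j - 1`
over `(i, j) ∈ D`, in the order making `(i, -j)` increase lexicographically. -/
def pdWord (D : Finset (ℕ × ℕ)) : List ℕ :=
  (D.sort pdRel).map fun p => p.1 + p.2 - 1

/-- The product `s_{i_1} s_{i_2} ⋯ s_{i_l}` of simple transpositions. -/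
def wordProd (l : List ℕ) : Equiv.Perm ℕ :=
  (l.map fun i => Equiv.swap i (i + 1)).prod

/-- `l` is a reduced word for `w`: a minimal-length word of positive letters whose
product of simple transpositions is `w`. -/
def IsReducedWordOf (w : Equiv.Perm ℕ) (l : List ℕ) : Prop :=
  (∀ a ∈ l, 1 ≤ a) ∧ wordProd l = w ∧
    ∀ l' : List ℕ, (∀ a ∈ l', 1 ≤ a) → wordProd l' = w → l.length ≤ l'.length

/-- The set `RP(w)` of reduced pipe dreams for `w`. -/
def RP (w : Equiv.Perm ℕ) : Set (Finset (ℕ × ℕ)) :=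
  {D | (∀ p ∈ D, 1 ≤ p.1 ∧ 1 ≤ p.2) ∧ IsReducedWordOf w (pdWord D)}

/-- `I^FPF_m`: involutions in `S_∞` that are fixed-point-free on `[m]` and fix
all `i > m`. -/
def IFPFm (m : ℕ) : Set (Equiv.Perm ℕ) :=
  {y | y 0 = 0 ∧ y * y = 1 ∧ (∀ i, 1 ≤ i → i ≤ m → y i ≠ i) ∧ ∀ i, m < i → y i = i}

/-- `z = FPF_m(y)`: `z` agrees with `y` on `[m]` and swaps `m + 2k - 1, m + 2k`
for all `k ≥ 1`. -/
def IsFPFStdOf (m : ℕ) (y z : Equiv.Perm ℕ) : Prop :=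
  (∀ i, i ≤ m → z i = y i) ∧
    ∀ k : ℕ, z (m + 2 * k + 1) = m + 2 * k + 2 ∧ z (m + 2 * k + 2) = m + 2 * k + 1

/-- The set `FP(z)` of fpf-involution pipe dreams for `z ∈ I^FPF_∞`. -/
def FP (z : Equiv.Perm ℕ) : Set (Finset (ℕ × ℕ)) :=
  {E | ∃ (m : ℕ) (y : Equiv.Perm ℕ) (D : Finset (ℕ × ℕ)), Even m ∧ y ∈ IFPFm m ∧
    IsFPFStdOf m y z ∧ D ∈ RP y ∧ D.image Prod.swap = D ∧
    E = D.filter fun p => p.2 < p.1}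

/-- The minor `det(U_{AB})` of the generic `m × n` matrix `U`, with rows `A` and
columns `B` listed in increasing order. -/
noncomputable def genMinor (K : Type*) [CommRing K] {m n : ℕ}
    (A : Finset (Fin m)) (B : Finset (Fin n)) (h : A.card = B.card) :
    MvPolynomial (Fin m × Fin n) K :=
  (Matrix.of fun s t : Fin A.card =>
    (MvPolynomial.X (A.orderEmbOfFin rfl s, B.orderEmbOfFin h.symm t) :
      MvPolynomial (Fin m × Fin n) K)).det

/-- The antidiagonal monomial `u_{AB} = ∏_{(a,b) ∈ A ⊙ B} u_{ab}`. -/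
noncomputable def genMon (K : Type*) [CommRing K] {m n : ℕ}
    (A : Finset (Fin m)) (B : Finset (Fin n)) (h : A.card = B.card) :
    MvPolynomial (Fin m × Fin n) K :=
  ∏ t : Fin A.card, MvPolynomial.X (A.orderEmbOfFin rfl t, B.orderEmbOfFin h.symm t.rev)

/-- The exponent vector of the antidiagonal monomial `u_{AB}`. -/
noncomputable def antidiagExp {m n : ℕ} (A : Finset (Fin m)) (B : Finset (Fin n))
    (h : A.card = B.card) : (Fin m × Fin n) →₀ ℕ :=
  ∑ t : Fin A.card, Finsupp.single (A.orderEmbOfFin rfl t, B.orderEmbOfFin h.symm t.rev) 1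

/-- The ideal `I_w`, generated by the minors `det(U_{AB})` with `A ⊆ [i]`, `B ⊆ [j]`,
`|A| = |B| = r_w(i,j) + 1` for some `(i,j) ∈ [m] × [n]`. -/
noncomputable def IwIdeal (K : Type*) [Field K] (m n : ℕ) (w : Equiv.Perm ℕ) :
    Ideal (MvPolynomial (Fin m × Fin n) K) :=
  Ideal.span {g : MvPolynomial (Fin m × Fin n) K |
    ∃ (i j : ℕ) (A : Finset (Fin m)) (B : Finset (Fin n)) (h : A.card = B.card),
      1 ≤ i ∧ i ≤ m ∧ 1 ≤ j ∧ j ≤ n ∧ (∀ a ∈ A, (a : ℕ) + 1 ≤ i) ∧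
      (∀ b ∈ B, (b : ℕ) + 1 ≤ j) ∧ A.card = rnk w i j + 1 ∧ g = genMinor K A B h}

/-- The monomial ideal `J_w`, generated by the monomials `u_{AB}` with `A ⊆ [i]`,
`B ⊆ [j]`, `|A| = |B| = r_w(i,j) + 1` for some `(i,j) ∈ [m] × [n]`. -/
noncomputable def JwIdeal (K : Type*) [Field K] (m n : ℕ) (w : Equiv.Perm ℕ) :
    Ideal (MvPolynomial (Fin m × Fin n) K) :=
  Ideal.span {g : MvPolynomial (Fin m × Fin n) K |
    ∃ (i j : ℕ) (A : Finset (Fin m)) (B : Finset (Fin n)) (h : A.card = B.card),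
      1 ≤ i ∧ i ≤ m ∧ 1 ≤ j ∧ j ≤ n ∧ (∀ a ∈ A, (a : ℕ) + 1 ≤ i) ∧
      (∀ b ∈ B, (b : ℕ) + 1 ≤ j) ∧ A.card = rnk w i j + 1 ∧ g = genMon K A B h}

/-- The matrix Schubert variety
`X_w = {A ∈ Mat_{m×n} : rank A_{[i][j]} ≤ r_w(i,j) for all (i,j) ∈ [m] × [n]}`. -/
noncomputable def Xw (K : Type*) [Field K] (m n : ℕ) (w : Equiv.Perm ℕ) :
    Set (Matrix (Fin m) (Fin n) K) :=
  {A | ∀ (i j : ℕ) (hi : i ≤ m) (hj : j ≤ n), 1 ≤ i → 1 ≤ j →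
    (A.submatrix (Fin.castLE hi) (Fin.castLE hj)).rank ≤ rnk w i j}

/-- `I(X_w)`: the ideal of polynomials vanishing on `X_w`. -/
noncomputable def IXw (K : Type*) [Field K] (m n : ℕ) (w : Equiv.Perm ℕ) :
    Ideal (MvPolynomial (Fin m × Fin n) K) :=
  vanishingIdeal (Xw K m n w) fun A v => A v.1 v.2

/-- The variable `u_{pq}` (with `1 ≤ q < p ≤ n`) of `R_n`. -/
def ssvar {n : ℕ} (p q : ℕ) (hp : p ≤ n) (hq : 1 ≤ q) (hqp : q < p) : SSVar n :=
  ⟨(⟨p - 1, by omega⟩, ⟨q - 1, by omega⟩), Fin.mk_lt_mk.mpr (by omega)⟩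

/-- Index set for the variables `u_{ij}`, `i > j ≥ 1`, over all positive integers. -/
abbrev PVar : Type := {p : ℕ × ℕ // 1 ≤ p.2 ∧ p.2 < p.1}

/-- The generic skew-symmetric array `U^ss` over the positive integers:
`u_{xy}` if `x > y`, `-u_{yx}` if `x < y`, `0` if `x = y`. -/
noncomputable def UssP (K : Type*) [CommRing K] (x y : ℕ) : MvPolynomial PVar K :=
  if h : 1 ≤ y ∧ y < x then MvPolynomial.X ⟨(x, y), h⟩
  else if h' : 1 ≤ x ∧ x < y then -MvPolynomial.X ⟨(y, x), h'⟩
  else 0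

/-- `pf(U^ss_{RR})` for a finite set `R` of positive integers. -/
noncomputable def pfUssP (K : Type*) [CommRing K] (R : Finset ℕ) : MvPolynomial PVar K :=
  Pfaffian (Matrix.of fun s t : Fin R.card =>
    UssP K (R.orderEmbOfFin rfl s) (R.orderEmbOfFin rfl t))

/-- `g_{AB}`: the Pfaffian of the `(|B|+|A|) × (|B|+|A|)` skew-symmetric matrix whose
rows and columns are labeled by `B` (increasing) followed by `A` (increasing), with
entry `U^ss_{xy}` at a position labeled `(x, y)`, except that the entry is `0` when
both labels come from the `A`-block. -/
noncomputable def gAB (K : Type*) [CommRing K] (A B : Finset ℕ) : MvPolynomial PVar K :=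
  Pfaffian ((Matrix.of fun p q : Fin B.card ⊕ Fin A.card =>
      match p, q with
      | Sum.inl s, Sum.inl t => UssP K (B.orderEmbOfFin rfl s) (B.orderEmbOfFin rfl t)
      | Sum.inl s, Sum.inr t => UssP K (B.orderEmbOfFin rfl s) (A.orderEmbOfFin rfl t)
      | Sum.inr s, Sum.inl t => UssP K (A.orderEmbOfFin rfl s) (B.orderEmbOfFin rfl t)
      | Sum.inr _, Sum.inr _ => (0 : MvPolynomial PVar K)).submatrix
    finSumFinEquiv.symm finSumFinEquiv.symm)

/-- The exponent of the sign `⟨T, S⟩ = (-1)^{|S||T| + C(|S|,2) + ∑ of the (1-indexed)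
positions in the increasing enumeration of `T` occupied by elements of `S`}`. -/
def setSgnExp (T S : Finset ℕ) : ℕ :=
  S.card * T.card + Nat.choose S.card 2 +
    ∑ t : Fin T.card, if T.orderEmbOfFin rfl t ∈ S then (t : ℕ) + 1 else 0


/-!
On involutions of `[N]` one has `2 · inv(z) = 4 · ℓ_fpf(z) + N`, so the change of `ℓ_fpf` under
`z ↦ (i,j) z (i,j)` can be read off from inversion counts on either side. A step that raises
`ℓ_fpf` has `z(i) < z(j)`, and then it lowers the rank function by one on each of the two transposed
rectangles `[i, j) × [z(i), z(j))` and `[z(i), z(j)) × [i, j)`. This gives (a) ⇒ (b).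

For (b) ⇒ (a), the inequalities on `[n] × [n]` first propagate to all `(p, q)`: outside `D^ss(z)`
the function `r_z` grows by one along the row or the column, or `p = q`, where both ranks are even.
Let `i` be the first point where `y` and `z` differ and `j > i` minimal with `z(i) < z(j) ≤ y(i)`.
Then `r_y < r_z` on `[i, j) × [z(i), y(i))`, and by parity the gap is at least two where this
rectangle meets its transpose. Hence conjugating `z` by `(i, j)`, or by `(i, z(j))` if
`z(i) < j < z(j)`, is a Bruhat cover that still lies below `y`, and one repeats.

For (b) ⇔ (c), the skew-symmetric signed permutation matrix of `y` attains all the ranks `r_y(i,j)`.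
-/

section Inversions

variable {α β : Type*} [LinearOrder α] [LinearOrder β] {s : Finset α} {i j : α}

/-- The inversions of `f` within `s`: the pairs `x < y` in `s` whose values are out of order. -/
def inversionsOn (s : Finset α) (f : α → β) : Finset (α × α) :=
  (s ×ˢ s).filter fun p => p.1 < p.2 ∧ f p.2 < f p.1

/-- The points of `s` lying strictly between `i` and `j` whose values lie strictly between
`f i` and `f j`; their number measures how far exchanging the values at `i` and `j` is from being
a Bruhat cover. -/
def betweenOn (s : Finset α) (f : α → β) (i j : α) : Finset α :=
  s.filter fun k => k ∈ Set.Ioo i j ∧ f k ∈ Set.Ioo (f i) (f j)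

theorem sum_product_insert_insert {M : Type*} [AddCommMonoid M] {t : Finset α} (hij : i ≠ j)
    (hi : i ∉ t) (hj : j ∉ t) (g : α → α → M) :
    ∑ x ∈ insert i (insert j t), ∑ y ∈ insert i (insert j t), g x y =
      (g i i + g i j + g j i + g j j) + ∑ k ∈ t, (g i k + g k i + g j k + g k j) +
        ∑ x ∈ t, ∑ y ∈ t, g x y := by
  have hi' : i ∉ insert j t := by simp [hij, hi]
  simp only [Finset.sum_insert hi', Finset.sum_insert hj, Finset.sum_add_distrib]
  abel

theorem card_inversionsOn_eq_sum (s : Finset α) (f : α → β) :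
    (inversionsOn s f).card = ∑ x ∈ s, ∑ y ∈ s, if x < y ∧ f y < f x then 1 else 0 := by
  rw [inversionsOn, Finset.card_filter, Finset.sum_product]

theorem inversion_count_swap {k : α} {a b c : β} (hij : i < j) (hab : a < b) (hki : k ≠ i)
    (hkj : k ≠ j) (hca : c ≠ a) (hcb : c ≠ b) :
    (((if i < k ∧ c < b then 1 else 0) + (if k < i ∧ b < c then 1 else 0) +
      (if j < k ∧ c < a then 1 else 0) + if k < j ∧ a < c then 1 else 0) : ℕ) =
    ((if i < k ∧ c < a then 1 else 0) + (if k < i ∧ a < c then 1 else 0) +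
      (if j < k ∧ c < b then 1 else 0) + if k < j ∧ b < c then 1 else 0) +
    2 * if k ∈ Set.Ioo i j ∧ c ∈ Set.Ioo a b then 1 else 0 := by
  rcases lt_or_gt_of_ne hki with hki | hki <;> rcases lt_or_gt_of_ne hkj with hkj | hkj <;>
    rcases lt_or_gt_of_ne hca with hca | hca <;> rcases lt_or_gt_of_ne hcb with hcb | hcb <;>
    first
    | exact absurd (hki.trans (hij.trans hkj)) (lt_irrefl k)
    | exact absurd (hca.trans (hab.trans hcb)) (lt_irrefl c)
    | simp [hki, hkj, hca, hcb, hki.not_gt, hkj.not_gt, hca.not_gt, hcb.not_gt]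

theorem card_betweenOn_insert_insert {t : Finset α} (f : α → β) (hi : i ∉ t) (hj : j ∉ t)
    (hij : i ≠ j) : (betweenOn (insert i (insert j t)) f i j).card =
      ∑ k ∈ t, if k ∈ Set.Ioo i j ∧ f k ∈ Set.Ioo (f i) (f j) then 1 else 0 := by
  rw [betweenOn, Finset.card_filter, Finset.sum_insert (by simp [hij, hi]), Finset.sum_insert hj]
  simp

theorem card_inversionsOn_comp_swap {f : α → β} (hf : f.Injective) (hi : i ∈ s) (hj : j ∈ s)
    (hij : i < j) (hfij : f i < f j) :
    (inversionsOn s (f ∘ Equiv.swap i j)).card =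
      (inversionsOn s f).card + 1 + 2 * (betweenOn s f i j).card := by
  obtain ⟨t, hit, hjt, rfl⟩ : ∃ t, i ∉ t ∧ j ∉ t ∧ s = insert i (insert j t) :=
    ⟨(s.erase i).erase j, by grind, by grind, by grind⟩
  have hki : ∀ k ∈ t, k ≠ i := fun k hk => ne_of_mem_of_not_mem hk hit
  have hkj : ∀ k ∈ t, k ≠ j := fun k hk => ne_of_mem_of_not_mem hk hjt
  have hswap : ∀ k ∈ t, (f ∘ Equiv.swap i j) k = f k := fun k hk => by
    rw [Function.comp_apply, Equiv.swap_apply_of_ne_of_ne (hki k hk) (hkj k hk)]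
  have hrest : ∑ x ∈ t, ∑ y ∈ t, (if x < y ∧ (f ∘ Equiv.swap i j) y < (f ∘ Equiv.swap i j) x
      then 1 else 0) = ∑ x ∈ t, ∑ y ∈ t, if x < y ∧ f y < f x then 1 else 0 :=
    Finset.sum_congr rfl fun x hx => Finset.sum_congr rfl fun y hy => by
      rw [hswap x hx, hswap y hy]
  have hpairs := Finset.sum_congr (rfl : t = t) fun k hk =>
    inversion_count_swap hij hfij (hki k hk) (hkj k hk) (hf.ne (hki k hk)) (hf.ne (hkj k hk))
  rw [Finset.sum_add_distrib (s := t) (g := fun k => 2 * _), ← Finset.mul_sum,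
    ← card_betweenOn_insert_insert f hit hjt hij.ne] at hpairs
  rw [card_inversionsOn_eq_sum, card_inversionsOn_eq_sum,
    sum_product_insert_insert hij.ne hit hjt, sum_product_insert_insert hij.ne hit hjt, hrest,
    Finset.sum_congr rfl fun k hk => by rw [hswap k hk]]
  simp only [Function.comp_apply, Equiv.swap_apply_left, Equiv.swap_apply_right, lt_irrefl,
    false_and, hij, hij.not_gt, hfij, hfij.not_gt, and_self, and_false, if_true, if_false]
  lia

theorem card_inversionsOn_inv {w : Equiv.Perm α} (hw : ∀ x, w x ∈ s ↔ x ∈ s) :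
    (inversionsOn s (w⁻¹ : Equiv.Perm α)).card = (inversionsOn s w).card := by
  refine (Finset.card_equiv ((Equiv.prodComm α α).trans (w.prodCongr w)) fun p => ?_).symm
  simp [inversionsOn, hw, and_comm]

end Inversions

section ConjSwap

/-- The conjugate `(i,j) z (i,j)` of `z`. -/
abbrev conjSwap {α : Type*} [DecidableEq α] (i j : α) (z : Equiv.Perm α) : Equiv.Perm α :=
  Equiv.swap i j * z * Equiv.swap i j

variable {α : Type*} {i j : α} {z : Equiv.Perm α}

theorem inv_eq_self_of_involutive (hz : Function.Involutive z) : z⁻¹ = z :=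
  inv_eq_of_mul_eq_one_left (Equiv.ext hz)

section DecidableEq

variable [DecidableEq α]

theorem conjSwap_conjSwap (i j : α) (z : Equiv.Perm α) :
    conjSwap i j (conjSwap i j z) = z := by
  simp [conjSwap, mul_assoc]

theorem conjSwap_eq_self (hz : Function.Involutive z) (hij : z i = j) : conjSwap i j z = z := by
  rw [← hij, conjSwap, mul_assoc, Equiv.mul_swap_eq_swap_mul, hz i, Equiv.swap_comm (z i) i,
    Equiv.swap_mul_self_mul]

theorem conjSwap_apply_left (hne : z j ≠ i) (hj : z j ≠ j) : conjSwap i j z i = z j := by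
  simp [conjSwap, Equiv.swap_apply_of_ne_of_ne hne hj]

theorem conjSwap_apply_right (hi : z i ≠ i) (hne : z i ≠ j) : conjSwap i j z j = z i := by
  simp [conjSwap, Equiv.swap_apply_of_ne_of_ne hi hne]

end DecidableEq

variable [LinearOrder α] {s : Finset α}

theorem card_inversionsOn_conjSwap (hz : Function.Involutive z) (hs : ∀ x, z x ∈ s ↔ x ∈ s)
    (hi : i ∈ s) (hj : j ∈ s) (hij : i < j) (hzij : z i < z j) (hzi : z i ≠ i) (hzj : z j ≠ j)
    (hne : z i ≠ j) :
    (inversionsOn s (conjSwap i j z)).card = (inversionsOn s z).card + 2 +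
      2 * ((betweenOn s z i j).card +
        (betweenOn s (Equiv.swap i j * z : Equiv.Perm α) i j).card) := by
  have hne' : z j ≠ i := fun h => hne (by rw [← h, hz j])
  have hswap_i : (Equiv.swap i j * z) i = z i := Equiv.swap_apply_of_ne_of_ne hzi hne
  have hswap_j : (Equiv.swap i j * z) j = z j := Equiv.swap_apply_of_ne_of_ne hne' hzj
  have hinv : (z * Equiv.swap i j)⁻¹ = Equiv.swap i j * z := by
    rw [mul_inv_rev, inv_eq_self_of_involutive hz, Equiv.swap_inv]
  have hright := card_inversionsOn_comp_swap z.injective hi hj hij hzij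
  have hleft := card_inversionsOn_comp_swap (Equiv.swap i j * z).injective hi hj hij
    (by rwa [hswap_i, hswap_j])
  have hflip := card_inversionsOn_inv (s := s) (w := z * Equiv.swap i j) fun x => by
    rw [Equiv.Perm.mul_apply, hs, Equiv.swap_apply_def]
    split_ifs with hxi hxj <;> simp [*]
  rw [hinv] at hflip
  rw [conjSwap, Equiv.Perm.coe_mul _ (Equiv.swap i j), hleft, hflip,
    Equiv.Perm.coe_mul z, hright]
  ring

theorem card_filter_lt_add_self {f : α → α} (hf : Function.Involutive f)
    (hs : ∀ x ∈ s, f x ∈ s) (hne : ∀ x ∈ s, f x ≠ x) :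
    (s.filter fun x => x < f x).card + (s.filter fun x => x < f x).card = s.card := by
  have hflip : (s.filter fun x => x < f x).card = (s.filter fun x => ¬ x < f x).card := by
    refine Finset.card_equiv hf.toPerm fun x => ?_
    have hfx : f x ∈ s ↔ x ∈ s := ⟨fun h => hf x ▸ hs _ h, hs x⟩
    simp only [Finset.mem_filter, Function.Involutive.coe_toPerm, hf x, hfx, not_lt]
    exact and_congr_right fun hx => ⟨le_of_lt, fun h => lt_of_le_of_ne h (hne x hx).symm⟩
  nth_rw 2 [hflip]
  exact Finset.card_filter_add_card_filter_not _

/-- The pairs `(p, q)` in `s` with `q < f p` and `q < p < f q`, that is, the part of the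
skew-symmetric Rothe diagram of `f` lying in `s × s`. -/
def skewRotheOn (s : Finset α) (f : α → α) : Finset (α × α) :=
  (s ×ˢ s).filter fun p => p.2 < f p.1 ∧ p.2 < p.1 ∧ p.1 < f p.2

theorem card_inversionsOn_of_involutive (hz : Function.Involutive z)
    (hs : ∀ x, z x ∈ s ↔ x ∈ s) :
    (inversionsOn s z).card =
      ((s ×ˢ s).filter fun p : α × α => p.2 < z p.1 ∧ p.1 < z p.2).card := by
  refine Finset.card_equiv ((Equiv.refl α).prodCongr z) fun p => ?_
  simp only [inversionsOn, Finset.mem_filter, Finset.mem_product, Equiv.prodCongr_apply,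
    Prod.map_fst, Prod.map_snd, Equiv.refl_apply, hs, hz p.2]
  tauto

/-- The diagonal splits `{(p, q) | q < z p, p < z q}` into two mirror images of the skew-symmetric
Rothe diagram and the points `p < z p`. -/
theorem card_inversionsOn_eq_skewRotheOn (hz : Function.Involutive z)
    (hs : ∀ x, z x ∈ s ↔ x ∈ s) :
    (inversionsOn s z).card =
      2 * (skewRotheOn s z).card + (s.filter fun x => x < z x).card := by
  have hbelow : (skewRotheOn s z).card = ∑ p ∈ s, ∑ q ∈ s,
      if q < z p ∧ q < p ∧ p < z q then 1 else 0 := by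
    rw [skewRotheOn, Finset.card_filter, Finset.sum_product]
  have habove : (skewRotheOn s z).card = ∑ p ∈ s, ∑ q ∈ s,
      if q < z p ∧ p < q ∧ p < z q then 1 else 0 := by
    rw [hbelow, Finset.sum_comm]
    exact Finset.sum_congr rfl fun p _ => Finset.sum_congr rfl fun q _ =>
      if_congr (by tauto) rfl rfl
  have hdiag : (s.filter fun x => x < z x).card = ∑ p ∈ s, ∑ q ∈ s,
      if p = q then (if p < z p then 1 else 0) else 0 := by
    rw [Finset.card_filter]
    exact Finset.sum_congr rfl fun p hp => by rw [Finset.sum_ite_eq, if_pos hp]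
  rw [two_mul, card_inversionsOn_of_involutive hz hs, Finset.card_filter, Finset.sum_product]
  nth_rw 1 [hbelow]
  rw [habove, hdiag]
  simp only [← Finset.sum_add_distrib]
  refine Finset.sum_congr rfl fun p _ => Finset.sum_congr rfl fun q _ => ?_
  rcases lt_trichotomy p q with hpq | rfl | hpq
  · simp [hpq, hpq.not_gt, hpq.ne]
  · simp
  · simp [hpq, hpq.not_gt, hpq.ne']

end ConjSwap

section Involutions

/-- A fixed-point-free involution of the positive integers, extended by `z 0 = 0`. -/
structure IsFPFInvol (z : Equiv.Perm ℕ) : Prop where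
  zero : z 0 = 0
  ne : ∀ i, 1 ≤ i → z i ≠ i
  involutive : Function.Involutive z

/-- A fixed-point-free involution of the positive integers that agrees with `1_FPF` beyond `N`.
As `N` is even, such an involution preserves `[N]`. -/
structure IsStdAbove (N : ℕ) (z : Equiv.Perm ℕ) : Prop extends IsFPFInvol z where
  even : Even N
  tail : ∀ i, N < i → z i = oneFPF i

variable {N i j : ℕ} {z : Equiv.Perm ℕ}

namespace IsFPFInvol

theorem one_le_apply (h : IsFPFInvol z) (hi : 1 ≤ i) : 1 ≤ z i := by
  rw [Nat.one_le_iff_ne_zero, ← h.zero]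
  exact z.injective.ne (by lia)

theorem conj (h : IsFPFInvol z) (hi : 1 ≤ i) (hj : 1 ≤ j) :
    IsFPFInvol (conjSwap i j z) where
  zero := by
    have hswap : Equiv.swap i j 0 = 0 := Equiv.swap_apply_of_ne_of_ne (by lia) (by lia)
    simp [hswap, h.zero]
  ne k hk hfix := by
    refine h.ne (Equiv.swap i j k) (by rw [Equiv.swap_apply_def]; split_ifs <;> assumption) ?_
    simpa using congrArg (Equiv.swap i j) hfix
  involutive k := by simp [h.involutive (Equiv.swap i j k)]

end IsFPFInvol

theorem exists_isStdAbove (hz : z ∈ IFPFInfty) : ∃ N, IsStdAbove N z := by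
  obtain ⟨hzero, hne, hsq, N, hN⟩ := hz
  exact ⟨2 * N, ⟨hzero, hne, fun i => DFunLike.congr_fun hsq i⟩, even_two_mul N,
    fun i hi => hN i (by lia)⟩

namespace IsStdAbove

theorem mono {M : ℕ} (h : IsStdAbove N z) (hM : Even M) (hNM : N ≤ M) : IsStdAbove M z :=
  ⟨h.toIsFPFInvol, hM, fun i hi => h.tail i (hNM.trans_lt hi)⟩

theorem lt_apply (h : IsStdAbove N z) (hi : N < i) : N < z i := by
  obtain ⟨m, hm⟩ := h.even
  rw [h.tail i hi, oneFPF]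
  split_ifs <;> lia

theorem apply_mem_Icc_iff (h : IsStdAbove N z) (i : ℕ) :
    z i ∈ Finset.Icc 1 N ↔ i ∈ Finset.Icc 1 N := by
  have hmaps : ∀ k, k ∈ Finset.Icc 1 N → z k ∈ Finset.Icc 1 N := fun k hk => by
    rw [Finset.mem_Icc] at hk ⊢
    refine ⟨h.one_le_apply hk.1, not_lt.1 fun hlt => ?_⟩
    have := h.lt_apply hlt
    rw [h.involutive k] at this
    lia
  exact ⟨fun hi => h.involutive i ▸ hmaps _ hi, hmaps i⟩

theorem conj (h : IsStdAbove N z) (hi : i ∈ Finset.Icc 1 N) (hj : j ∈ Finset.Icc 1 N) :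
    IsStdAbove N (conjSwap i j z) where
  toIsFPFInvol := h.toIsFPFInvol.conj (Finset.mem_Icc.1 hi).1 (Finset.mem_Icc.1 hj).1
  even := h.even
  tail k hk := by
    have hswap : ∀ m, N < m → Equiv.swap i j m = m := fun m hm => by
      rw [Finset.mem_Icc] at hi hj
      exact Equiv.swap_apply_of_ne_of_ne (by lia) (by lia)
    rw [Equiv.Perm.mul_apply, Equiv.Perm.mul_apply, hswap k hk, hswap _ (h.lt_apply hk),
      h.tail k hk]

theorem coe_skewRotheOn (h : IsStdAbove N z) : ↑(skewRotheOn (Finset.Icc 1 N) z) = Dss z := by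
  ext ⟨p, q⟩
  simp only [skewRotheOn, Finset.coe_filter, Finset.mem_product, Finset.mem_Icc, Set.mem_ofPred_eq,
    Dss]
  refine ⟨fun ⟨hmem, hlt⟩ => ⟨hmem.2.1, hlt⟩, fun ⟨hq, hqp, hlt, hpq⟩ => ⟨?_, hqp, hlt, hpq⟩⟩
  have hqN : q ≤ N := not_lt.1 fun hlt' => by
    have htail := h.tail q hlt'
    rw [oneFPF] at htail
    split_ifs at htail <;> lia
  have := Finset.mem_Icc.1 ((h.apply_mem_Icc_iff q).2 (Finset.mem_Icc.2 ⟨hq, hqN⟩))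
  lia

theorem ellFpf_eq (h : IsStdAbove N z) : ellFpf z = (skewRotheOn (Finset.Icc 1 N) z).card := by
  rw [ellFpf, ← h.coe_skewRotheOn, Set.ncard_coe_finset]

theorem ellFpf_le (h : IsStdAbove N z) : ellFpf z ≤ N * N := by
  rw [h.ellFpf_eq]
  exact (Finset.card_filter_le _ _).trans (by simp)

theorem two_mul_card_inversionsOn (h : IsStdAbove N z) :
    2 * (inversionsOn (Finset.Icc 1 N) z).card = 4 * ellFpf z + N := by
  have hsplit := card_inversionsOn_eq_skewRotheOn h.involutive h.apply_mem_Icc_iff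
  have hexc := card_filter_lt_add_self h.involutive (fun x => (h.apply_mem_Icc_iff x).2)
    fun x hx => h.ne x (Finset.mem_Icc.1 hx).1
  rw [← h.ellFpf_eq] at hsplit
  rw [Nat.card_Icc] at hexc
  lia

theorem ellFpf_conjSwap (h : IsStdAbove N z) (hi : i ∈ Finset.Icc 1 N) (hj : j ∈ Finset.Icc 1 N)
    (hij : i < j) (hzij : z i < z j) (hne : z i ≠ j) :
    ellFpf (conjSwap i j z) = ellFpf z + 1 + ((betweenOn (Finset.Icc 1 N) z i j).card +
      (betweenOn (Finset.Icc 1 N) (Equiv.swap i j * z : Equiv.Perm ℕ) i j).card) := by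
  have hinv := card_inversionsOn_conjSwap h.involutive h.apply_mem_Icc_iff hi hj hij hzij
    (h.ne i (Finset.mem_Icc.1 hi).1) (h.ne j (Finset.mem_Icc.1 hj).1) hne
  have hz := h.two_mul_card_inversionsOn
  have hconj := (h.conj hi hj).two_mul_card_inversionsOn
  lia

theorem ellFpf_lt_ellFpf_conjSwap (h : IsStdAbove N z) (hi : i ∈ Finset.Icc 1 N)
    (hj : j ∈ Finset.Icc 1 N) (hij : i < j) (hzij : z i < z j) (hne : z i ≠ j) :
    ellFpf z < ellFpf (conjSwap i j z) := by
  rw [h.ellFpf_conjSwap hi hj hij hzij hne]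
  lia

theorem ellFpf_conjSwap_of_empty (h : IsStdAbove N z) (hi : i ∈ Finset.Icc 1 N)
    (hj : j ∈ Finset.Icc 1 N) (hij : i < j) (hzij : z i < z j) (hlt : i < z i)
    (hside : j < z i ∨ z j < j)
    (hempty : ∀ k ∈ Set.Ioo i j, z k ∉ Set.Ioo (z i) (z j)) :
    ellFpf (conjSwap i j z) = ellFpf z + 1 := by
  have hne : z i ≠ j := by lia
  have hswap_i : Equiv.swap i j (z i) = z i := Equiv.swap_apply_of_ne_of_ne hlt.ne' hne
  have hswap_j : Equiv.swap i j (z j) = z j :=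
    Equiv.swap_apply_of_ne_of_ne (by lia) (h.ne j (Finset.mem_Icc.1 hj).1)
  have hbetween : betweenOn (Finset.Icc 1 N) z i j = ∅ :=
    Finset.filter_eq_empty_iff.2 fun k _ hk => hempty k hk.1 hk.2
  have hbetween_swap :
      betweenOn (Finset.Icc 1 N) (Equiv.swap i j * z : Equiv.Perm ℕ) i j = ∅ := by
    refine Finset.filter_eq_empty_iff.2 fun k _ ⟨hk, hzk⟩ => ?_
    simp only [Equiv.Perm.mul_apply, hswap_i, hswap_j] at hzk
    rw [Equiv.swap_apply_def] at hzk
    split_ifs at hzk with hzki hzkj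
    · have := h.involutive k
      rw [hzki] at this
      grind
    · have := h.involutive k
      rw [hzkj] at this
      grind
    · exact hempty k hk hzk
  rw [h.ellFpf_conjSwap hi hj hij hzij hne, hbetween, hbetween_swap, Finset.card_empty]

end IsStdAbove

end Involutions

section Rank

variable {i j p q : ℕ} {w y z : Equiv.Perm ℕ}

theorem rnk_zero (w : Equiv.Perm ℕ) (q : ℕ) : rnk w 0 q = 0 := by simp [rnk]

theorem rnk_succ (w : Equiv.Perm ℕ) (p q : ℕ) :
    rnk w (p + 1) q = rnk w p q + if w (p + 1) ∈ Finset.Icc 1 q then 1 else 0 := by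
  rw [rnk, rnk, Finset.card_filter, Finset.card_filter, Finset.sum_Icc_succ_top (by lia)]

theorem rnk_inv (w : Equiv.Perm ℕ) (p q : ℕ) : rnk w⁻¹ q p = rnk w p q :=
  (Finset.card_equiv w fun a => by simp [and_comm]).symm

theorem rnk_comm_of_involutive (hz : Function.Involutive z) (p q : ℕ) :
    rnk z p q = rnk z q p := by
  rw [← rnk_inv, inv_eq_self_of_involutive hz]

theorem rnk_congr (h : ∀ k ∈ Finset.Icc 1 p, y k = z k) (q : ℕ) : rnk y p q = rnk z p q :=
  congrArg Finset.card (Finset.filter_congr fun k hk => by rw [h k hk])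

theorem rnk_eq_add_card_Ioc (w : Equiv.Perm ℕ) (p : ℕ) {q' : ℕ} (hq : q ≤ q') :
    rnk w p q' = rnk w p q + ((Finset.Icc 1 p).filter fun k => w k ∈ Set.Ioc q q').card := by
  rw [rnk, rnk, ← Finset.card_union_of_disjoint
    (Finset.disjoint_filter.2 fun k _ => by simp only [Finset.mem_Icc, Set.mem_Ioc]; lia),
    ← Finset.filter_or]
  refine congrArg Finset.card (Finset.filter_congr fun k _ => ?_)
  simp only [Finset.mem_Icc, Set.mem_Ioc]
  lia

theorem rnk_swap (hi : 1 ≤ i) (hij : i < j) (hwi : 1 ≤ w i) (hwij : w i < w j) (p q : ℕ) :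
    rnk w p q = rnk (w * Equiv.swap i j) p q +
      if p ∈ Set.Ico i j ∧ q ∈ Set.Ico (w i) (w j) then 1 else 0 := by
  induction p with
  | zero => rw [rnk_zero, rnk_zero, if_neg (by simp only [Set.mem_Ico]; lia)]
  | succ p ih =>
    rw [rnk_succ, rnk_succ, ih, Equiv.Perm.mul_apply, Equiv.swap_apply_def]
    simp only [Finset.mem_Icc, Set.mem_Ico]
    split_ifs <;> grind

theorem even_rnk (hz : IsFPFInvol z) (p : ℕ) : Even (rnk z p p) := by
  refine ⟨_, (card_filter_lt_add_self hz.involutive (fun k hk => ?_) fun k hk => ?_).symm⟩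
  · rw [Finset.mem_filter] at hk ⊢
    rw [hz.involutive k]
    exact hk.symm
  · exact hz.ne k (Finset.mem_Icc.1 (Finset.mem_filter.1 hk).1).1

theorem rnk_conjSwap (hz : IsFPFInvol z) (hi : 1 ≤ i) (hij : i < j) (hzij : z i < z j)
    (hne : z i ≠ j) (p q : ℕ) :
    rnk z p q = rnk (conjSwap i j z) p q +
      (if p ∈ Set.Ico i j ∧ q ∈ Set.Ico (z i) (z j) then 1 else 0) +
      (if q ∈ Set.Ico i j ∧ p ∈ Set.Ico (z i) (z j) then 1 else 0) := by
  have hj : 1 ≤ j := hi.trans hij.le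
  have hne' : z j ≠ i := fun h => hne (by rw [← h, hz.involutive j])
  have hswap_i : (Equiv.swap i j * z) i = z i := Equiv.swap_apply_of_ne_of_ne (hz.ne i hi) hne
  have hswap_j : (Equiv.swap i j * z) j = z j := Equiv.swap_apply_of_ne_of_ne hne' (hz.ne j hj)
  have hinv : (z * Equiv.swap i j)⁻¹ = Equiv.swap i j * z := by
    rw [mul_inv_rev, inv_eq_self_of_involutive hz.involutive, Equiv.swap_inv]
  have hleft := rnk_swap (w := Equiv.swap i j * z) hi hij (hswap_i ▸ hz.one_le_apply hi)
    (by rwa [hswap_i, hswap_j]) q p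
  rw [hswap_i, hswap_j] at hleft
  rw [rnk_swap hi hij (hz.one_le_apply hi) hzij p q, ← rnk_inv, hinv, hleft,
    rnk_comm_of_involutive (hz.conj hi hj).involutive q p]
  ring

theorem rnk_add_rnk_le {q' : ℕ} (hq : q ≤ q')
    (h : ∀ k ∈ Finset.Icc 1 p, z k ∈ Set.Ioc q q' → y k ∈ Set.Ioc q q') :
    rnk y p q + rnk z p q' ≤ rnk z p q + rnk y p q' := by
  have hle := Finset.card_le_card (Finset.monotone_filter_right (Finset.Icc 1 p) h)
  rw [rnk_eq_add_card_Ioc z p hq, rnk_eq_add_card_Ioc y p hq]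
  lia

theorem rnk_add_rnk_lt {q' k : ℕ} (hq : q ≤ q')
    (h : ∀ k ∈ Finset.Icc 1 p, z k ∈ Set.Ioc q q' → y k ∈ Set.Ioc q q')
    (hk : k ∈ Finset.Icc 1 p) (hyk : y k ∈ Set.Ioc q q') (hzk : z k ∉ Set.Ioc q q') :
    rnk y p q + rnk z p q' < rnk z p q + rnk y p q' := by
  have hsub := Finset.monotone_filter_right (Finset.Icc 1 p) h
  have hlt := Finset.card_lt_card (hsub.ssubset_of_mem_notMem
    (Finset.mem_filter.2 ⟨hk, hyk⟩) fun hmem => hzk (Finset.mem_filter.1 hmem).2)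
  rw [rnk_eq_add_card_Ioc z p hq, rnk_eq_add_card_Ioc y p hq]
  lia

end Rank

section BruhatToRank

variable {N i j : ℕ} {y z : Equiv.Perm ℕ}

theorem rnk_conjSwap_le (hz : IsFPFInvol z) (hi : 1 ≤ i) (hij : i < j) (hzij : z i < z j)
    (hne : z i ≠ j) (p q : ℕ) : rnk (conjSwap i j z) p q ≤ rnk z p q := by
  rw [rnk_conjSwap hz hi hij hzij hne p q, add_assoc]
  exact Nat.le_add_right _ _

theorem IsStdAbove.apply_lt_apply_of_ellFpf_lt (hz : IsStdAbove N z) (hi : i ∈ Finset.Icc 1 N)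
    (hj : j ∈ Finset.Icc 1 N) (hij : i < j) (hne : z i ≠ j)
    (hell : ellFpf z < ellFpf (conjSwap i j z)) : z i < z j := by
  by_contra hnot
  have hji : z j < z i := lt_of_le_of_ne (not_lt.1 hnot) (z.injective.ne hij.ne')
  have hzi := hz.ne i (Finset.mem_Icc.1 hi).1
  have hzj := hz.ne j (Finset.mem_Icc.1 hj).1
  have hleft : conjSwap i j z i = z j :=
    conjSwap_apply_left (fun h => hne (by rw [← h, hz.involutive j])) hzj
  have hright : conjSwap i j z j = z i := conjSwap_apply_right hzi hne
  have hback := (hz.conj hi hj).ellFpf_lt_ellFpf_conjSwap hi hj hij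
    (by rwa [hleft, hright]) (by rwa [hleft])
  rw [conjSwap_conjSwap] at hback
  exact hell.not_gt hback

theorem IsStdAbove.rnk_conjSwap_le_of_ellFpf_lt (hz : IsStdAbove N z) (hi : i ∈ Finset.Icc 1 N)
    (hj : j ∈ Finset.Icc 1 N) (hij : i < j) (hell : ellFpf z < ellFpf (conjSwap i j z))
    (p q : ℕ) : rnk (conjSwap i j z) p q ≤ rnk z p q := by
  have hne : z i ≠ j := fun h => hell.ne (by rw [conjSwap_eq_self hz.involutive h])
  exact rnk_conjSwap_le hz.toIsFPFInvol (Finset.mem_Icc.1 hi).1 hij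
    (hz.apply_lt_apply_of_ellFpf_lt hi hj hij hne hell) hne p q

theorem rnk_le_of_fpfBruhatLe (hz : z ∈ IFPFInfty) (hzy : fpfBruhatLe z y) (p q : ℕ) :
    rnk y p q ≤ rnk z p q := by
  suffices h : (∃ N, IsStdAbove N y) ∧ rnk y p q ≤ rnk z p q from h.2
  induction hzy with
  | refl => exact ⟨exists_isStdAbove hz, le_rfl⟩
  | tail _ hstep ih =>
    obtain ⟨⟨N, hN⟩, hle⟩ := ih
    obtain ⟨i, j, hi, hij, rfl, hell⟩ := hstep
    have hM := hN.mono (hN.even.add (even_two_mul j)) (Nat.le_add_right N (2 * j))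
    have hi_mem : i ∈ Finset.Icc 1 (N + 2 * j) := Finset.mem_Icc.2 (by lia)
    have hj_mem : j ∈ Finset.Icc 1 (N + 2 * j) := Finset.mem_Icc.2 (by lia)
    exact ⟨⟨_, hM.conj hi_mem hj_mem⟩,
      (hM.rnk_conjSwap_le_of_ellFpf_lt hi_mem hj_mem hij (by lia) p q).trans hle⟩

end BruhatToRank

section RankExtension

variable {n p q : ℕ} {y z : Equiv.Perm ℕ}

theorem rnk_succ_le_of_apply_mem (h : rnk y p q ≤ rnk z p q) (hz : z (p + 1) ∈ Finset.Icc 1 q) :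
    rnk y (p + 1) q ≤ rnk z (p + 1) q := by
  rw [rnk_succ, rnk_succ, if_pos hz]
  split_ifs <;> lia

theorem rnk_succ_succ_le (hy : IsFPFInvol y) (hz : IsFPFInvol z)
    (h : rnk y p (p + 1) ≤ rnk z p (p + 1)) :
    rnk y (p + 1) (p + 1) ≤ rnk z (p + 1) (p + 1) := by
  obtain ⟨a, ha⟩ := even_rnk hy (p + 1)
  obtain ⟨b, hb⟩ := even_rnk hz (p + 1)
  have hy_succ := rnk_succ y p (p + 1)
  have hz_succ := rnk_succ z p (p + 1)
  split_ifs at hy_succ hz_succ <;> lia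

theorem rnk_le_of_Dss_subset_of_le (hy : IsFPFInvol y) (hz : IsFPFInvol z)
    (hD : Dss z ⊆ Set.Icc 1 n ×ˢ Set.Icc 1 n)
    (h : ∀ i j, 1 ≤ i → i ≤ n → 1 ≤ j → j ≤ n → rnk y i j ≤ rnk z i j) (hqp : q ≤ p) :
    rnk y p q ≤ rnk z p q := by
  have hy_comm := rnk_comm_of_involutive hy.involutive
  have hz_comm := rnk_comm_of_involutive hz.involutive
  induction p generalizing q with
  | zero => simp [rnk_zero]
  | succ p ihp =>
    induction q with
    | zero => simp [hy_comm _ 0, rnk_zero]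
    | succ q ihq =>
      have hleft : rnk y q (p + 1) ≤ rnk z q (p + 1) := by
        rw [hy_comm, hz_comm q]
        exact ihq (by lia)
      obtain rfl | hlt : q = p ∨ q < p := by lia
      · exact rnk_succ_succ_le hy hz hleft
      by_cases hrow : z (p + 1) ≤ q + 1
      · exact rnk_succ_le_of_apply_mem (ihp hlt)
          (Finset.mem_Icc.2 ⟨hz.one_le_apply (by lia), hrow⟩)
      by_cases hcol : z (q + 1) ≤ p + 1
      · rw [hy_comm, hz_comm (p + 1)]
        exact rnk_succ_le_of_apply_mem hleft
          (Finset.mem_Icc.2 ⟨hz.one_le_apply (by lia), hcol⟩)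
      have hmem : (p + 1, q + 1) ∈ Dss z := ⟨by lia, by lia, by lia, by lia⟩
      obtain ⟨hp, hq⟩ := hD hmem
      exact h _ _ hp.1 hp.2 hq.1 hq.2

theorem rnk_le_of_Dss_subset (hy : IsFPFInvol y) (hz : IsFPFInvol z)
    (hD : Dss z ⊆ Set.Icc 1 n ×ˢ Set.Icc 1 n)
    (h : ∀ i j, 1 ≤ i → i ≤ n → 1 ≤ j → j ≤ n → rnk y i j ≤ rnk z i j) (p q : ℕ) :
    rnk y p q ≤ rnk z p q := by
  rcases le_total q p with hqp | hpq
  · exact rnk_le_of_Dss_subset_of_le hy hz hD h hqp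
  · rw [rnk_comm_of_involutive hy.involutive, rnk_comm_of_involutive hz.involutive p]
    exact rnk_le_of_Dss_subset_of_le hy hz hD h hpq

end RankExtension

section RankToBruhat

/-- `i` is the first point at which `y` and `z` differ. -/
structure IsFirstDiff (y z : Equiv.Perm ℕ) (i : ℕ) : Prop where
  ne : y i ≠ z i
  agree : ∀ k < i, y k = z k

variable {N i j m p q : ℕ} {y z : Equiv.Perm ℕ}

theorem exists_isFirstDiff (h : y ≠ z) : ∃ i, IsFirstDiff y z i := by
  classical
  have hex : ∃ i, y i ≠ z i := by
    contrapose! h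
    exact Equiv.ext h
  exact ⟨Nat.find hex, Nat.find_spec hex, fun k hk => not_not.1 (Nat.find_min hex hk)⟩

namespace IsFirstDiff

theorem one_le (hi : IsFirstDiff y z i) (hy : IsFPFInvol y) (hz : IsFPFInvol z) : 1 ≤ i := by
  rw [Nat.one_le_iff_ne_zero]
  rintro rfl
  exact hi.ne (hy.zero.trans hz.zero.symm)

theorem le_of_isStdAbove (hi : IsFirstDiff y z i) (hy : IsStdAbove N y) (hz : IsStdAbove N z) :
    i ≤ N :=
  not_lt.1 fun hlt => hi.ne ((hy.tail i hlt).trans (hz.tail i hlt).symm)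

theorem le_apply_of_ne (hi : IsFirstDiff y z i) (hy : Function.Involutive y)
    (hz : Function.Involutive z) (hm : y m ≠ z m) : i ≤ z m := by
  refine not_lt.1 fun hlt => hm ?_
  rw [← hy (z m), hi.agree _ hlt, hz m]

theorem lt_apply (hi : IsFirstDiff y z i) (hy : IsFPFInvol y) (hz : IsFPFInvol z) : i < z i :=
  lt_of_le_of_ne (hi.le_apply_of_ne hy.involutive hz.involutive hi.ne)
    (hz.ne i (hi.one_le hy hz)).symm

theorem apply_lt_apply (hi : IsFirstDiff y z i) (hy : IsFPFInvol y) (hz : IsFPFInvol z)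
    (hle : rnk y i (y i) ≤ rnk z i (y i)) : z i < y i := by
  by_contra hnot
  have hlt : y i < z i := lt_of_le_of_ne (not_lt.1 hnot) hi.ne
  obtain ⟨k, rfl⟩ : ∃ k, i = k + 1 := ⟨i - 1, by have := hi.one_le hy hz; lia⟩
  have hprev : rnk y k (y (k + 1)) = rnk z k (y (k + 1)) :=
    rnk_congr (fun m hm => hi.agree m (by have := (Finset.mem_Icc.1 hm).2; lia)) _
  rw [rnk_succ, rnk_succ, hprev, if_pos (Finset.mem_Icc.2 ⟨hy.one_le_apply (by lia), le_rfl⟩),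
    if_neg fun h => hlt.not_ge (Finset.mem_Icc.1 h).2] at hle
  lia

theorem exists_least_apply_mem_Ioc (hi : IsFirstDiff y z i) (hy : Function.Involutive y)
    (hz : Function.Involutive z) (hlt : z i < y i) :
    ∃ j, i < j ∧ z j ∈ Set.Ioc (z i) (y i) ∧
      ∀ k ∈ Set.Ioo i j, z k ∉ Set.Ioc (z i) (y i) := by
  classical
  have hzy : z (y i) ≠ i := fun h => hi.ne (by rw [← hz (y i), h])
  have hex : ∃ j, i < j ∧ z j ∈ Set.Ioc (z i) (y i) := by
    refine ⟨z (y i), ?_, by rw [hz]; exact ⟨hlt, le_rfl⟩⟩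
    exact lt_of_le_of_ne (hi.le_apply_of_ne hy hz (by rw [hy]; exact hzy.symm)) hzy.symm
  exact ⟨Nat.find hex, (Nat.find_spec hex).1, (Nat.find_spec hex).2,
    fun k hk hzk => Nat.find_min hex hk.2 ⟨hk.1, hzk⟩⟩

theorem apply_mem_Ioc {q' k : ℕ} (hi : IsFirstDiff y z i)
    (hrow : ∀ k ∈ Set.Ioo i j, z k ∉ Set.Ioc (z i) (y i)) (hkj : k < j) (hq : z i ≤ q)
    (hq' : q' ≤ y i) (hzk : z k ∈ Set.Ioc q q') : y k ∈ Set.Ioc q q' := by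
  rcases lt_trichotomy k i with hki | rfl | hik
  · rwa [hi.agree k hki]
  · exact absurd hq hzk.1.not_ge
  · exact absurd ⟨hq.trans_lt hzk.1, hzk.2.trans hq'⟩ (hrow k ⟨hik, hkj⟩)

theorem rnk_lt_rnk (hi : IsFirstDiff y z i) (hpos : 1 ≤ i)
    (hrow : ∀ k ∈ Set.Ioo i j, z k ∉ Set.Ioc (z i) (y i)) (hle : ∀ p q, rnk y p q ≤ rnk z p q)
    (hp : p ∈ Set.Ico i j) (hq : q ∈ Set.Ico (z i) (y i)) : rnk y p q < rnk z p q := by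
  have hlt := rnk_add_rnk_lt hq.2.le
    (fun k hk => hi.apply_mem_Ioc hrow ((Finset.mem_Icc.1 hk).2.trans_lt hp.2) hq.1 le_rfl)
    (Finset.mem_Icc.2 ⟨hpos, hp.1⟩) ⟨hq.2, le_rfl⟩ fun hzi => hzi.1.not_ge hq.1
  have := hle p (y i)
  lia

/-- At `(p, p)` both ranks are even, so the gap `1` is a gap `2`; it persists down the row. -/
theorem rnk_add_two_le_rnk (hi : IsFirstDiff y z i) (hy : IsFPFInvol y) (hz : IsFPFInvol z)
    (hrow : ∀ k ∈ Set.Ioo i j, z k ∉ Set.Ioc (z i) (y i)) (hle : ∀ p q, rnk y p q ≤ rnk z p q)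
    (hp : p ∈ Set.Ico (z i) (min j (y i))) (hq : q ∈ Set.Ico (z i) (min j (y i))) :
    rnk y p q + 2 ≤ rnk z p q := by
  wlog hqp : q ≤ p generalizing p q
  · rw [rnk_comm_of_involutive hy.involutive, rnk_comm_of_involutive hz.involutive p]
    exact this hq hp (le_of_not_ge hqp)
  obtain ⟨hzp, hpj, hpy⟩ : z i ≤ p ∧ p < j ∧ p < y i := ⟨hp.1, lt_min_iff.1 hp.2⟩
  have hdiag := hi.rnk_lt_rnk (hi.one_le hy hz) hrow hle
    ⟨(hi.lt_apply hy hz).le.trans hzp, hpj⟩ ⟨hzp, hpy⟩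
  have hrow_le := rnk_add_rnk_le hqp fun k hk =>
    hi.apply_mem_Ioc hrow ((Finset.mem_Icc.1 hk).2.trans_lt hpj) hq.1 hpy.le
  obtain ⟨a, ha⟩ := even_rnk hy p
  obtain ⟨b, hb⟩ := even_rnk hz p
  lia

end IsFirstDiff

/-- Conditions under which `(i,j) z (i,j)` covers `z` and still lies below `y`: no point of `z`
obstructs the cover, and wherever the cover lowers the rank function of `z`, there is enough room
above the rank function of `y`. -/
structure IsPivot (y z : Equiv.Perm ℕ) (i j : ℕ) : Prop where
  one_le : 1 ≤ i
  lt : i < j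
  lt_apply : i < z i
  apply_lt_apply : z i < z j
  side : j < z i ∨ z j < j
  empty : ∀ k ∈ Set.Ioo i j, z k ∉ Set.Ioo (z i) (z j)
  gap_one : ∀ p ∈ Set.Ico i j, ∀ q ∈ Set.Ico (z i) (z j), rnk y p q + 1 ≤ rnk z p q
  gap_two : ∀ p ∈ Set.Ico (z i) (min j (z j)), ∀ q ∈ Set.Ico (z i) (min j (z j)),
    rnk y p q + 2 ≤ rnk z p q

theorem IsPivot.rnk_le_rnk_conjSwap (h : IsPivot y z i j) (hy : IsFPFInvol y)
    (hz : IsFPFInvol z) (hle : rnk y p q ≤ rnk z p q) :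
    rnk y p q ≤ rnk (conjSwap i j z) p q := by
  have hne : z i ≠ j := by
    have := h.side
    have := h.apply_lt_apply
    lia
  have hdrop := rnk_conjSwap hz h.one_le h.lt h.apply_lt_apply hne p q
  split_ifs at hdrop with hpq hqp hqp
  · have := h.gap_two p ⟨hqp.2.1, lt_min hpq.1.2 hqp.2.2⟩ q ⟨hpq.2.1, lt_min hqp.1.2 hpq.2.2⟩
    lia
  · have := h.gap_one p hpq.1 q hpq.2
    lia
  · have := h.gap_one q hqp.1 p hqp.2
    rw [rnk_comm_of_involutive hy.involutive, rnk_comm_of_involutive hz.involutive q] at this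
    lia
  · lia

theorem IsFirstDiff.isPivot (hi : IsFirstDiff y z i) (hy : IsFPFInvol y) (hz : IsFPFInvol z)
    (hle : ∀ p q, rnk y p q ≤ rnk z p q) (hij : i < j) (hzj : z j ∈ Set.Ioc (z i) (y i))
    (hrow : ∀ k ∈ Set.Ioo i j, z k ∉ Set.Ioc (z i) (y i)) (hside : j < z i ∨ z j < j) :
    IsPivot y z i j where
  one_le := hi.one_le hy hz
  lt := hij
  lt_apply := hi.lt_apply hy hz
  apply_lt_apply := hzj.1
  side := hside
  empty k hk hzk := hrow k hk ⟨hzk.1, hzk.2.le.trans hzj.2⟩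
  gap_one _ hp _ hq := hi.rnk_lt_rnk (hi.one_le hy hz) hrow hle hp ⟨hq.1, hq.2.trans_le hzj.2⟩
  gap_two _ hp _ hq :=
    have hmin : min j (z j) ≤ min j (y i) := min_le_min_left j hzj.2
    hi.rnk_add_two_le_rnk hy hz hrow hle ⟨hp.1, hp.2.trans_le hmin⟩ ⟨hq.1, hq.2.trans_le hmin⟩

theorem IsFirstDiff.isPivot_apply (hi : IsFirstDiff y z i) (hy : IsFPFInvol y)
    (hz : IsFPFInvol z) (hle : ∀ p q, rnk y p q ≤ rnk z p q) (hzj : z j ≤ y i)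
    (hrow : ∀ k ∈ Set.Ioo i j, z k ∉ Set.Ioc (z i) (y i)) (hij : z i < j) (hjz : j < z j) :
    IsPivot y z i (z j) where
  one_le := hi.one_le hy hz
  lt := (hi.lt_apply hy hz).trans (hij.trans hjz)
  lt_apply := hi.lt_apply hy hz
  apply_lt_apply := by rwa [hz.involutive]
  side := Or.inr (by rwa [hz.involutive])
  empty k hk hzk := by
    rw [hz.involutive] at hzk
    refine hrow (z k) ⟨(hi.lt_apply hy hz).trans hzk.1, hzk.2⟩ ?_
    rw [hz.involutive]
    refine ⟨?_, hk.2.le.trans hzj⟩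
    by_contra hkz
    exact hrow k ⟨hk.1, (not_lt.1 hkz).trans_lt hij⟩ ⟨hzk.1, (hzk.2.trans hjz).le.trans hzj⟩
  gap_one p hp q hq := by
    rw [hz.involutive] at hq
    have hi_lt := hi.lt_apply hy hz
    by_cases hpj : p < j
    · exact hi.rnk_lt_rnk (hi.one_le hy hz) hrow hle ⟨hp.1, hpj⟩
        ⟨hq.1, (hq.2.trans hjz).trans_le hzj⟩
    · rw [rnk_comm_of_involutive hy.involutive, rnk_comm_of_involutive hz.involutive p]
      exact hi.rnk_lt_rnk (hi.one_le hy hz) hrow hle ⟨hi_lt.le.trans hq.1, hq.2⟩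
        ⟨hij.le.trans (not_lt.1 hpj), hp.2.trans_le hzj⟩
  gap_two p hp q hq := by
    rw [hz.involutive, min_comm] at hp hq
    have hmin : min j (z j) ≤ min j (y i) := min_le_min_left j hzj
    exact hi.rnk_add_two_le_rnk hy hz hrow hle ⟨hp.1, hp.2.trans_le hmin⟩
      ⟨hq.1, hq.2.trans_le hmin⟩

theorem exists_isPivot (hy : IsStdAbove N y) (hz : IsStdAbove N z)
    (hle : ∀ p q, rnk y p q ≤ rnk z p q) (hne : y ≠ z) :
    ∃ i ∈ Finset.Icc 1 N, ∃ j ∈ Finset.Icc 1 N, IsPivot y z i j := by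
  obtain ⟨i, hi⟩ := exists_isFirstDiff hne
  have hy' := hy.toIsFPFInvol
  have hz' := hz.toIsFPFInvol
  have hi_mem : i ∈ Finset.Icc 1 N :=
    Finset.mem_Icc.2 ⟨hi.one_le hy' hz', hi.le_of_isStdAbove hy hz⟩
  have hlt : z i < y i := hi.apply_lt_apply hy' hz' (hle i (y i))
  obtain ⟨j, hij, hzj, hrow⟩ := hi.exists_least_apply_mem_Ioc hy.involutive hz.involutive hlt
  have hzj_mem : z j ∈ Finset.Icc 1 N := by
    have := Finset.mem_Icc.1 ((hy.apply_mem_Icc_iff i).2 hi_mem)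
    exact Finset.mem_Icc.2 ⟨by have := hzj.1; lia, hzj.2.trans this.2⟩
  refine ⟨i, hi_mem, ?_⟩
  by_cases hcase : z i < j ∧ j < z j
  · exact ⟨z j, hzj_mem, hi.isPivot_apply hy' hz' hle hzj.2 hrow hcase.1 hcase.2⟩
  · have hjne : j ≠ z i := by
      rintro rfl
      rw [hz.involutive] at hzj
      exact hzj.1.not_gt (hi.lt_apply hy' hz')
    have hzjne := hz.ne j (by lia)
    exact ⟨j, (hz.apply_mem_Icc_iff j).1 hzj_mem,
      hi.isPivot hy' hz' hle hij hzj hrow (by lia)⟩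

theorem fpfBruhatLe_of_rnk_le (hy : IsStdAbove N y) (hz : IsStdAbove N z)
    (hle : ∀ p q, rnk y p q ≤ rnk z p q) : fpfBruhatLe z y := by
  induction hd : N * N - ellFpf z using Nat.strong_induction_on generalizing z with
  | _ d ih =>
    by_cases hne : y = z
    · exact hne ▸ Relation.ReflTransGen.refl
    obtain ⟨i, hi, j, hj, hpivot⟩ := exists_isPivot hy hz hle hne
    have hconj := hz.conj hi hj
    have hell : ellFpf (conjSwap i j z) = ellFpf z + 1 :=
      hz.ellFpf_conjSwap_of_empty hi hj hpivot.lt hpivot.apply_lt_apply hpivot.lt_apply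
        hpivot.side hpivot.empty
    have hbound := hconj.ellFpf_le
    refine Relation.ReflTransGen.head ⟨i, j, hpivot.one_le, hpivot.lt, rfl, hell⟩ ?_
    exact ih _ (by lia) hconj
      (fun p q => hpivot.rnk_le_rnk_conjSwap hy.toIsFPFInvol hz.toIsFPFInvol (hle p q)) rfl

theorem fpfBruhatLe_iff_rnk_le (hy : y ∈ IFPFInfty) (hz : z ∈ IFPFInfty) :
    fpfBruhatLe z y ↔ ∀ p q, rnk y p q ≤ rnk z p q := by
  refine ⟨rnk_le_of_fpfBruhatLe hz, fun hle => ?_⟩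
  obtain ⟨N, hN⟩ := exists_isStdAbove hy
  obtain ⟨M, hM⟩ := exists_isStdAbove hz
  have heven : Even (N + M) := hN.even.add hM.even
  exact fpfBruhatLe_of_rnk_le (hN.mono heven (by lia)) (hM.mono heven (by lia)) hle

theorem fpfBruhatLe_iff_rnk_le_on_square {n : ℕ} (hy : y ∈ IFPFInfty) (hz : z ∈ FPFIn n) :
    fpfBruhatLe z y ↔
      ∀ i j, 1 ≤ i → i ≤ n → 1 ≤ j → j ≤ n → rnk y i j ≤ rnk z i j := by
  obtain ⟨N, hN⟩ := exists_isStdAbove hy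
  obtain ⟨M, hM⟩ := exists_isStdAbove hz.1
  rw [fpfBruhatLe_iff_rnk_le hy hz.1]
  exact ⟨fun hle i j _ _ _ _ => hle i j,
    rnk_le_of_Dss_subset hN.toIsFPFInvol hM.toIsFPFInvol hz.2⟩

end RankToBruhat

section Matrices

variable {K : Type*} [Field K]

section PartialPermutation

variable {m n : Type*} [Fintype n] {A : Matrix m n K}

theorem mul_transpose_map_inv_eq_diagonal [DecidableEq m] [DecidablePred fun p => ∃ q, A p q ≠ 0]
    (hrow : ∀ p q q', A p q ≠ 0 → A p q' ≠ 0 → q = q')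
    (hcol : ∀ p p' q, A p q ≠ 0 → A p' q ≠ 0 → p = p') :
    A * (A.map (·⁻¹)).transpose = Matrix.diagonal fun p => if ∃ q, A p q ≠ 0 then 1 else 0 := by
  ext p p'
  have hterm : ∀ q, A p q * (A p' q)⁻¹ ≠ 0 → A p q ≠ 0 ∧ p = p' := fun q hq =>
    have hpq := left_ne_zero_of_mul hq
    ⟨hpq, hcol p p' q hpq fun h => right_ne_zero_of_mul hq (by rw [h, inv_zero])⟩
  simp only [Matrix.mul_apply, Matrix.transpose_apply, Matrix.map_apply, Matrix.diagonal_apply]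
  split_ifs with hpp hex
  · subst hpp
    obtain ⟨q, hq⟩ := hex
    rw [Finset.sum_eq_single_of_mem q (Finset.mem_univ q)
      fun q' _ hne => not_not.1 fun h => hne (hrow p q' q (hterm q' h).1 hq), mul_inv_cancel₀ hq]
  · exact Finset.sum_eq_zero fun q _ => not_not.1 fun h => hex ⟨q, (hterm q h).1⟩
  · exact Finset.sum_eq_zero fun q _ => not_not.1 fun h => hpp (hterm q h).2

theorem rank_eq_ncard_of_partial_permutation [Finite m]
    (hrow : ∀ p q q', A p q ≠ 0 → A p q' ≠ 0 → q = q')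
    (hcol : ∀ p p' q, A p q ≠ 0 → A p' q ≠ 0 → p = p') :
    A.rank = {p | ∃ q, A p q ≠ 0}.ncard := by
  classical
  have := Fintype.ofFinite m
  have hAB := mul_transpose_map_inv_eq_diagonal hrow hcol
  set B := (A.map (·⁻¹)).transpose
  have hABA : A * B * A = A := by
    ext p q
    rw [hAB, Matrix.diagonal_mul]
    by_cases hpq : A p q = 0
    · rw [hpq, mul_zero]
    · rw [if_pos ⟨q, hpq⟩, one_mul]
  have hrank : A.rank = (A * B).rank := by
    refine le_antisymm ?_ (Matrix.rank_mul_le_left A B)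
    calc A.rank = (A * B * A).rank := by rw [hABA]
      _ ≤ (A * B).rank := Matrix.rank_mul_le_left (A * B) A
  rw [hrank, hAB, Matrix.rank_diagonal, ← Nat.card_eq_fintype_card]
  exact Nat.card_congr (Equiv.subtypeEquivRight fun p => by simp)

end PartialPermutation

/-- The skew-symmetric signed permutation matrix of `y`, cut down to `[n] × [n]`, with the entries
`1` above and `-1` below the diagonal. As in `MatSS`, the index `p : Fin n` stands for `p + 1`. -/
def skewMat (K : Type*) [Field K] (n : ℕ) (y : Equiv.Perm ℕ) : Matrix (Fin n) (Fin n) K :=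
  Matrix.of fun p q => if y (p + 1) = q + 1 then (if p < q then 1 else -1) else 0

variable {n : ℕ} {y z : Equiv.Perm ℕ}

theorem skewMat_ne_zero_iff {p q : Fin n} : skewMat K n y p q ≠ 0 ↔ y (p + 1) = q + 1 := by
  rw [skewMat, Matrix.of_apply]
  split_ifs <;> simp [*]

theorem skewMat_mem_MatSS (hy : IsFPFInvol y) : skewMat K n y ∈ MatSS K n := by
  refine ⟨?_, fun p => if_neg (hy.ne _ (by lia))⟩
  ext p q
  have hflip : y (q + 1) = p + 1 ↔ y (p + 1) = q + 1 := by
    rw [hy.involutive.eq_iff, eq_comm]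
  have hne : y (p + 1) = q + 1 → p ≠ q := by
    rintro h rfl
    exact hy.ne _ (by lia) h
  simp only [Matrix.transpose_apply, Matrix.neg_apply, skewMat, Matrix.of_apply, hflip]
  split_ifs <;> grind

theorem rank_skewMat_submatrix (y : Equiv.Perm ℕ) {i j : ℕ} (hi : i ≤ n) (hj : j ≤ n) :
    ((skewMat K n y).submatrix (Fin.castLE hi) (Fin.castLE hj)).rank = rnk y i j := by
  rw [rank_eq_ncard_of_partial_permutation, rnk, ← Set.ncard_coe_finset]
  · simp only [Matrix.submatrix_apply, skewMat_ne_zero_iff, Fin.val_castLE]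
    refine Set.ncard_congr (fun p _ => (p : ℕ) + 1) ?_ ?_ ?_
    · rintro p ⟨q, hq⟩
      simp only [Finset.coe_filter, Finset.mem_Icc, Set.mem_ofPred_eq]
      lia
    · intro p p' _ _ h
      exact Fin.ext (by lia)
    · intro a ha
      simp only [Finset.coe_filter, Finset.mem_Icc, Set.mem_ofPred_eq] at ha
      have ha_pred : a - 1 + 1 = a := by lia
      exact ⟨⟨a - 1, by lia⟩, ⟨⟨y a - 1, by lia⟩, by simp only [ha_pred]; lia⟩, ha_pred⟩
  · simp only [Matrix.submatrix_apply, skewMat_ne_zero_iff, Fin.val_castLE]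
    exact fun p q q' h h' => Fin.ext (by lia)
  · simp only [Matrix.submatrix_apply, skewMat_ne_zero_iff, Fin.val_castLE]
    exact fun p p' q h h' => Fin.ext (by have := y.injective (h.trans h'.symm); lia)

theorem Xss_subset_Xss_iff (hy : IsFPFInvol y) :
    Xss K n y ⊆ Xss K n z ↔
      ∀ i j, 1 ≤ i → i ≤ n → 1 ≤ j → j ≤ n → rnk y i j ≤ rnk z i j := by
  refine ⟨fun hsub i j hi hin hj hjn => ?_, fun hle A hA => ⟨hA.1, fun i j hin hjn hi hj =>
    (hA.2 i j hin hjn hi hj).trans (hle i j hi hin hj hjn)⟩⟩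
  have hmem : skewMat K n y ∈ Xss K n y :=
    ⟨skewMat_mem_MatSS hy, fun i j hi hj _ _ => (rank_skewMat_submatrix y hi hj).le⟩
  rw [← rank_skewMat_submatrix (K := K) y hin hjn]
  exact (hsub hmem).2 i j hin hjn hi hj

end Matrices

theorem statement3_general (K : Type*) [Field K] (n : ℕ) (y z : Equiv.Perm ℕ)
    (hy : y ∈ IFPFInfty) (hz : z ∈ FPFIn n) :
    (fpfBruhatLe z y ↔
        ∀ i j : ℕ, 1 ≤ i → i ≤ n → 1 ≤ j → j ≤ n → rnk y i j ≤ rnk z i j) ∧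
      (fpfBruhatLe z y ↔ Xss K n y ⊆ Xss K n z) := by
  have hrank := fpfBruhatLe_iff_rnk_le_on_square hy hz
  obtain ⟨_, hN⟩ := exists_isStdAbove hy
  exact ⟨hrank, hrank.trans (Xss_subset_Xss_iff hN.toIsFPFInvol).symm⟩

/-- For `y, z ∈ FPF_n(I_n)` the following are equivalent:
(a) `y ≥ z` in the Bruhat order on `I^FPF_∞`;
(b) `r_y(i,j) ≤ r_z(i,j)` for all `(i,j) ∈ [n] × [n]`;
(c) `X^ss_y ⊆ X^ss_z`. -/
theorem statement3 (K : Type*) [Field K] [IsAlgClosed K] (n : ℕ) (hn : 1 ≤ n)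
    (y z : Equiv.Perm ℕ) (hy : y ∈ FPFIn n) (hz : z ∈ FPFIn n) :
    (fpfBruhatLe z y ↔
        ∀ i j : ℕ, 1 ≤ i → i ≤ n → 1 ≤ j → j ≤ n → rnk y i j ≤ rnk z i j) ∧
      (fpfBruhatLe z y ↔ Xss K n y ⊆ Xss K n z) := by
  exact statement3_general K n y z hy.1 hz

end Paper
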